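/- arXiv:2112.14394 — 2 statements merged into one kernel-verified Lean document; each statement's English description precedes it below -/
import Mathlib

section
/- Let Z₁, Z₂ ∈ ℂ³ with ‖Z₁‖ = ‖Z₂‖ = 1. For a unit vector W ∈ ℂ³ define S_W = {Q·Qᵀ : Q ∈ SU(3), Q·e₁ = W}, where e₁ = (1,0,0)ᵀ. Then S_{Z₁} = S_{Z₂} if and only if Z₁ = Z₂ or Z₁ = −Z₂. -/
/-- Every unit vector is the first column of some matrix of SU(3). -/
theorem exists_su3 (Z : Fin 3 → ℂ) (hZ : ∑ i, ‖Z i‖ ^ 2 = 1) :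
    ∃ Q ∈ Matrix.specialUnitaryGroup (Fin 3) ℂ, Q.mulVec (Pi.single 0 1) = Z := by
  have hv : Orthonormal ℂ (({0} : Set (Fin 3)).domRestrict
      (fun _ : Fin 3 => (WithLp.toLp 2 Z : EuclideanSpace ℂ (Fin 3)))) := by
    constructor
    · intro i
      simp [EuclideanSpace.norm_eq]
      exact hZ
    · intro i j hij
      exact absurd (Subsingleton.elim i j) hij
  obtain ⟨b, hb⟩ := hv.exists_orthonormalBasis_extension_of_card_eq (by simp)
  have hb0 := hb 0 rfl
  set U : Matrix (Fin 3) (Fin 3) ℂ := Matrix.of fun i j => b j i with hU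
  have hUU : star U * U = 1 := by
    ext i j
    have h := orthonormal_iff_ite.mp b.orthonormal i j
    rw [PiLp.inner_apply] at h
    simp only [RCLike.inner_apply] at h
    rw [Matrix.mul_apply, Matrix.one_apply, ← h]
    refine Finset.sum_congr rfl fun k _ => ?_
    simp [hU, Matrix.star_apply, mul_comm]
  have hd : star U.det * U.det = 1 := by
    have := congrArg Matrix.det hUU
    rwa [Matrix.det_mul, Matrix.star_eq_conjTranspose, Matrix.det_conjTranspose,
      Matrix.det_one] at this
  refine ⟨U * Matrix.diagonal ![1, 1, star U.det], ?_, ?_⟩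
  · rw [Matrix.mem_specialUnitaryGroup_iff]
    constructor
    · refine mul_mem (Matrix.mem_unitaryGroup_iff'.mpr hUU) ?_
      rw [Matrix.mem_unitaryGroup_iff, Matrix.star_eq_conjTranspose,
        Matrix.diagonal_conjTranspose, Matrix.diagonal_mul_diagonal, ← Matrix.diagonal_one]
      congr 1
      funext i
      fin_cases i <;> simp
      simpa using hd
    · rw [Matrix.det_mul, Matrix.det_diagonal]
      simp only [Fin.prod_univ_three]
      simpa [mul_comm] using hd
  · funext i
    simp [hU, hb0]

/-- If `Q e₁ = W` and `Q` is unitary then `Q Qᵀ` maps `conj W` to `W`. -/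
theorem mulVec_conj (Q : Matrix (Fin 3) (Fin 3) ℂ) (W : Fin 3 → ℂ)
    (hQ : Q ∈ Matrix.specialUnitaryGroup (Fin 3) ℂ)
    (h : Q.mulVec (Pi.single 0 1) = W) : (Q * Q.transpose).mulVec (star W) = W := by
  have h1 : star Q * Q = 1 :=
    Matrix.mem_unitaryGroup_iff'.mp (Matrix.mem_specialUnitaryGroup_iff.mp hQ).1
  have h2 : Q.transpose.mulVec (star W) = Pi.single 0 1 := by
    funext i
    have h3 := congrFun (congrFun h1 0) i
    rw [← h]
    simp only [Matrix.mul_apply, Matrix.star_apply, Matrix.one_apply] at h3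
    simp only [Matrix.mulVec, dotProduct, Matrix.transpose_apply]
    have : (Pi.single 0 1 : Fin 3 → ℂ) i = if 0 = i then 1 else 0 := by
      fin_cases i <;> simp
    rw [this, ← h3]
    refine Finset.sum_congr rfl fun k _ => ?_
    simp [Fin.sum_univ_three, mul_comm]
  rw [← Matrix.mulVec_mulVec, h2, h]

theorem diag_mem (d : Fin 3 → ℂ) (h : ∀ i, d i * star (d i) = 1) (hp : d 0 * d 1 * d 2 = 1) :
    Matrix.diagonal d ∈ Matrix.specialUnitaryGroup (Fin 3) ℂ := by
  rw [Matrix.mem_specialUnitaryGroup_iff]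
  constructor
  · rw [Matrix.mem_unitaryGroup_iff, Matrix.star_eq_conjTranspose,
      Matrix.diagonal_conjTranspose, Matrix.diagonal_mul_diagonal, ← Matrix.diagonal_one]
    congr 1
    funext i
    exact h i
  · rw [Matrix.det_diagonal, Fin.prod_univ_three, hp]

/-- The set for `W` is contained in the set for `-W`. -/
theorem su3_neg_subset (W : Fin 3 → ℂ) (x : Matrix (Fin 3) (Fin 3) ℂ)
    (h : ∃ Q ∈ Matrix.specialUnitaryGroup (Fin 3) ℂ,
            Q.mulVec (Pi.single 0 1) = W ∧ x = Q * Q.transpose) :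
    ∃ Q ∈ Matrix.specialUnitaryGroup (Fin 3) ℂ,
            Q.mulVec (Pi.single 0 1) = -W ∧ x = Q * Q.transpose := by
  obtain ⟨Q, hQ, hW, rfl⟩ := h
  refine ⟨Q * Matrix.diagonal ![-1, -1, 1], mul_mem hQ (diag_mem _ ?_ ?_), ?_, ?_⟩
  · intro i
    fin_cases i <;> simp
  · simp
  · rw [← hW]
    funext i
    simp
  · ext i j
    simp [Matrix.mul_apply, Fin.sum_univ_three, Matrix.diagonal]

/-- For unit vectors `Z₁, Z₂ ∈ ℂ³` and
`S_W = {Q·Qᵀ : Q ∈ SU(3), Q·e₁ = W}`, one has `S_{Z₁} = S_{Z₂}` iff `Z₁ = ±Z₂`. -/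
theorem stmt9 (Z₁ Z₂ : Fin 3 → ℂ)
    (hZ₁ : ∑ i, ‖Z₁ i‖ ^ 2 = 1) (hZ₂ : ∑ i, ‖Z₂ i‖ ^ 2 = 1)
    (S : (Fin 3 → ℂ) → Set (Matrix (Fin 3) (Fin 3) ℂ))
    (hS : ∀ W : Fin 3 → ℂ, S W =
      {x | ∃ Q ∈ Matrix.specialUnitaryGroup (Fin 3) ℂ,
            Q.mulVec (Pi.single 0 1) = W ∧ x = Q * Q.transpose}) :
    S Z₁ = S Z₂ ↔ Z₁ = Z₂ ∨ Z₁ = -Z₂ := by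
  constructor
  · intro h
    obtain ⟨Q, hQ, hQ1⟩ := exists_su3 Z₁ hZ₁
    have key : ∀ x ∈ S Z₁, x.mulVec (star Z₂) = Z₂ := by
      intro x hx
      rw [h, hS] at hx
      obtain ⟨P, hP, hP1, rfl⟩ := hx
      exact mulVec_conj P Z₂ hP hP1
    have hD : Q * Matrix.diagonal ![1, Complex.I, -Complex.I] ∈
        Matrix.specialUnitaryGroup (Fin 3) ℂ := by
      refine mul_mem hQ (diag_mem _ ?_ ?_)
      · intro i
        fin_cases i <;> simp
      · simp
    have k1 := key (Q * Q.transpose) (by rw [hS]; exact ⟨Q, hQ, hQ1, rfl⟩)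
    have k2 := key _ (by
      rw [hS]
      refine ⟨_, hD, ?_, rfl⟩
      rw [← hQ1]
      funext i
      simp)
    set c : ℂ := ∑ j, Z₁ j * star (Z₂ j) with hc
    have hsum : Q * Q.transpose + (Q * Matrix.diagonal ![1, Complex.I, -Complex.I]) *
        (Q * Matrix.diagonal ![1, Complex.I, -Complex.I]).transpose =
        Matrix.of fun i j => 2 * (Z₁ i * Z₁ j) := by
      ext i j
      rw [← hQ1]
      simp [Matrix.mul_apply, Fin.sum_univ_three, Matrix.diagonal]
      linear_combination (Q i 1 * Q j 1 + Q i 2 * Q j 2) * Complex.I_sq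
    have hZ : ∀ i, Z₂ i = c * Z₁ i := by
      intro i
      have h3 := congrArg (fun M => Matrix.mulVec M (star Z₂) i) hsum
      simp only [Matrix.add_mulVec, k1, k2, Pi.add_apply] at h3
      simp only [Matrix.mulVec, dotProduct, Matrix.of_apply, Fin.sum_univ_three,
        Pi.star_apply] at h3
      simp only [hc, Fin.sum_univ_three]
      linear_combination h3 / 2
    have hone : ∑ j, Z₁ j * star (Z₁ j) = 1 := by
      have : ∀ j, Z₁ j * star (Z₁ j) = ((‖Z₁ j‖ ^ 2 : ℝ) : ℂ) := by
        intro j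
        simpa using Complex.mul_conj' (Z₁ j)
      simp only [this]
      rw [← Complex.ofReal_sum, hZ₁, Complex.ofReal_one]
    have hreal : c = star c := by
      have e : c = star c * ∑ j, Z₁ j * star (Z₁ j) := by
        rw [Finset.mul_sum]
        conv_lhs => rw [hc]
        refine Finset.sum_congr rfl fun j _ => ?_
        rw [hZ j, star_mul']
        ring
      rwa [hone, mul_one] at e
    have hn : ‖c‖ ^ 2 = 1 := by
      have e := hZ₂
      simp only [hZ, norm_mul, mul_pow] at e
      rwa [← Finset.mul_sum, hZ₁, mul_one] at e
    have hcc : c * c = 1 := by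
      have e : c * star c = ((‖c‖ ^ 2 : ℝ) : ℂ) := by simpa using Complex.mul_conj' c
      rwa [← hreal, hn, Complex.ofReal_one] at e
    rcases mul_self_eq_one_iff.mp hcc with e | e
    · left; funext i; rw [hZ, e, one_mul]
    · right; funext i; rw [Pi.neg_apply, hZ, e]; ring
  · rintro (rfl | rfl)
    · rfl
    · rw [hS, hS]
      ext x
      constructor
      · intro h
        simpa using su3_neg_subset _ x h
      · intro h
        exact su3_neg_subset _ x h
end

section
/- Let ε ∈ {1, −1} and let θ, H, C, λ₁, λ₂, λ₃, λ₄ be real numbers with cos θ ≠ 0, sin θ ≠ 0, cos θ + sin θ ≠ 0, and cos θ − sin θ ≠ 0, satisfying: ε·cos²θ = −λ₁² + H·λ₁ + C; ε·sin²θ = −λ₂² + H·λ₂ + C; ε·(cos θ + sin θ)² = −λ₃² + H·λ₃ + C; ε·(cos θ − sin θ)² = −λ₄² + H·λ₄ + C; ε·cos θ·sin θ·(cos θ + sin θ) = −λ₁·λ₃·sin θ − λ₂·λ₃·cos θ + λ₁·λ₂·(cos θ + sin θ); and −ε·cos θ·sin θ·(cos θ − sin θ) = λ₁·λ₄·sin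 θ − λ₂·λ₄·cos θ + λ₁·λ₂·(cos θ − sin θ). Then ((2C³ + 4ε(C² − 1))·H⁶ + C²·(15C² + 8Cε − 20)·H⁴ + 8C⁴·(3C − 4ε)·H² − 16C⁶) · ((2C² − 3)·H⁴ + 4C²·(C − 4ε)·H² − 16C⁴) = 0. -/
open Real in
/-- the polynomial relation for the mean curvature `H` obtained by
elimination in the `B₂` case of Proposition 4.1.
(Here `l₁, ..., l₄` stand for the principal curvatures `λ₁, ..., λ₄`.) -/
theorem stmt13 (ε θ H C l₁ l₂ l₃ l₄ : ℝ)
    (hε : ε = 1 ∨ ε = -1)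
    (hc : cos θ ≠ 0) (hs : sin θ ≠ 0)
    (hcs : cos θ + sin θ ≠ 0) (hcs' : cos θ - sin θ ≠ 0)
    (e1 : ε * cos θ ^ 2 = -l₁ ^ 2 + H * l₁ + C)
    (e2 : ε * sin θ ^ 2 = -l₂ ^ 2 + H * l₂ + C)
    (e3 : ε * (cos θ + sin θ) ^ 2 = -l₃ ^ 2 + H * l₃ + C)
    (e4 : ε * (cos θ - sin θ) ^ 2 = -l₄ ^ 2 + H * l₄ + C)
    (e5 : ε * cos θ * sin θ * (cos θ + sin θ)
        = -l₁ * l₃ * sin θ - l₂ * l₃ * cos θ + l₁ * l₂ * (cos θ + sin θ))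
    (e6 : -(ε * cos θ * sin θ * (cos θ - sin θ))
        = l₁ * l₄ * sin θ - l₂ * l₄ * cos θ + l₁ * l₂ * (cos θ - sin θ)) :
    ((2 * C ^ 3 + 4 * ε * (C ^ 2 - 1)) * H ^ 6
      + C ^ 2 * (15 * C ^ 2 + 8 * C * ε - 20) * H ^ 4
      + 8 * C ^ 4 * (3 * C - 4 * ε) * H ^ 2 - 16 * C ^ 6)
    * ((2 * C ^ 2 - 3) * H ^ 4 + 4 * C ^ 2 * (C - 4 * ε) * H ^ 2 - 16 * C ^ 4) = 0 := by
  have hε2 : ε ^ 2 = 1 := by rcases hε with h | h <;> rw [h] <;> norm_num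
  generalize cos θ = c at *
  generalize sin θ = s at *
  have hε0 : ε ≠ 0 := by rintro rfl; norm_num at hε2
  -- clear `l₃`, `l₄` using `e5`, `e6`
  have f3 : (c + s) ^ 2 * ((l₁ ^ 2 + ε * c ^ 2) * (l₂ ^ 2 + ε * s ^ 2))
      = H * ((c + s) * (l₁ * l₂ - ε * c * s)) * (l₁ * s + l₂ * c)
        + C * (l₁ * s + l₂ * c) ^ 2 := by
    have h : (c + s) * (l₁ * l₂ - ε * c * s) = l₃ * (l₁ * s + l₂ * c) := by
      linear_combination -e5
    have h2 : ((c + s) * (l₁ * l₂ - ε * c * s)) ^ 2 = (l₃ * (l₁ * s + l₂ * c)) ^ 2 := by rw [h]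
    rw [h]
    linear_combination h2 + (l₁ * s + l₂ * c) ^ 2 * e3
  have f4 : (c - s) ^ 2 * ((l₁ ^ 2 + ε * c ^ 2) * (l₂ ^ 2 + ε * s ^ 2))
      = H * ((c - s) * (l₁ * l₂ + ε * c * s)) * (l₂ * c - l₁ * s)
        + C * (l₂ * c - l₁ * s) ^ 2 := by
    have h : (c - s) * (l₁ * l₂ + ε * c * s) = l₄ * (l₂ * c - l₁ * s) := by
      linear_combination -e6
    have h2 : ((c - s) * (l₁ * l₂ + ε * c * s)) ^ 2 = (l₄ * (l₂ * c - l₁ * s)) ^ 2 := by rw [h]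
    rw [h]
    linear_combination h2 + (l₂ * c - l₁ * s) ^ 2 * e4
  obtain ⟨A, hA⟩ : ∃ A, A = l₁ ^ 2 + ε * c ^ 2 := ⟨_, rfl⟩
  obtain ⟨B, hB⟩ : ∃ B, B = l₂ ^ 2 + ε * s ^ 2 := ⟨_, rfl⟩
  rw [← hA, ← hB] at f3 f4
  have a1 : H * l₁ = A - C := by linear_combination -e1 - hA
  have b1 : H * l₂ = B - C := by linear_combination -e2 - hB
  obtain ⟨U, hU⟩ : ∃ U, U = ε * c ^ 2 := ⟨_, rfl⟩
  obtain ⟨V, hV⟩ : ∃ V, V = ε * s ^ 2 := ⟨_, rfl⟩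
  have hU0 : U ≠ 0 := by rw [hU]; positivity
  have hV0 : V ≠ 0 := by rw [hV]; positivity
  have hAU : A = l₁ ^ 2 + U := by rw [hA, hU]
  have hBV : B = l₂ ^ 2 + V := by rw [hB, hV]
  -- half the sum of `f3` and `f4`
  have g1 : (U + V) * (A * B) = H * (l₁ * l₂ * (l₂ * U + l₁ * V) - U * V * (l₁ + l₂))
      + C * (l₁ ^ 2 * V + l₂ ^ 2 * U) := by
    rw [hU, hV]
    linear_combination ε / 2 * (f3 + f4)
  have g2 : U * V * (A + B - C) = 0 := by
    have : H * (l₁ * l₂ * (l₂ * U + l₁ * V) - U * V * (l₁ + l₂))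
      = (A - C) * l₂ ^ 2 * U + (B - C) * l₁ ^ 2 * V - U * V * (A + B - 2 * C) := by
      rw [← a1, ← b1]
      linear_combination U * V * (-a1 - b1)
    rw [this] at g1
    have k1 : l₁ ^ 2 = A - U := by linear_combination -hAU
    have k2 : l₂ ^ 2 = B - V := by linear_combination -hBV
    rw [k1, k2] at g1
    linear_combination g1 / 2
  have g3 : A + B = C := by
    have := (mul_eq_zero.mp g2).resolve_left (mul_ne_zero hU0 hV0)
    linarith
  -- the difference of `f3` and `f4`, divided by `2 c s`
  have g4 : 2 * (A * B) = H * (l₁ * l₂ * (l₁ + l₂) - l₂ * U - l₁ * V) + 2 * C * (l₁ * l₂) := by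
    rw [hU, hV]
    have h2 : 2 * c * s ≠ 0 := by positivity
    apply mul_left_cancel₀ h2
    linear_combination f3 - f4
  have a2 : H * l₁ = -B := by linear_combination a1 + g3
  have b2 : H * l₂ = -A := by linear_combination b1 + g3
  have g5 : 2 * (A * B) = l₁ * l₂ * C + A * (A - l₁ ^ 2) + B * (B - l₂ ^ 2) := by
    linear_combination g4 + l₁ * l₂ * (a2 + b2) - l₁ * l₂ * g3 - U * b2 - V * a2 - A * hAU - B * hBV
  have g6 : H ^ 2 * (A - B) ^ 2 = 0 := by
    have h1 : H ^ 2 * l₁ ^ 2 = B ^ 2 := by rw [← mul_pow, a2]; ring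
    have h2 : H ^ 2 * l₂ ^ 2 = A ^ 2 := by rw [← mul_pow, b2]; ring
    have h3 : H ^ 2 * (l₁ * l₂) = A * B := by
      have : H ^ 2 * (l₁ * l₂) = (H * l₁) * (H * l₂) := by ring
      rw [this, a2, b2]; ring
    linear_combination -H ^ 2 * g5 - C * h3 + A * h1 + B * h2 + A * B * g3
  have hH : H = 0 := by
    by_contra hH
    have hAB : A - B = 0 := by
      rcases mul_eq_zero.mp g6 with h | h
      · exact absurd (pow_eq_zero_iff (by norm_num) |>.mp h) hH
      · exact pow_eq_zero_iff (by norm_num) |>.mp h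
    have hl : l₁ = l₂ := by
      apply mul_left_cancel₀ hH
      linear_combination a2 - b2 + hAB
    have h : ε * ((c + s) * (c - s)) = 0 := by
      rw [hl] at hA
      linear_combination hAB - hA + hB
    exact mul_ne_zero hε0 (mul_ne_zero hcs hcs') h
  have hC : C = 0 := by
    rw [hH] at a1 b1
    linear_combination a1 + b1 + g3
  rw [hH, hC]
  ring
end
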